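/- Let n ≥ 1, let 0 < λ_1 < λ_2 < … < λ_n be real transport speeds, and let Ǧ : [0,1] × [0, 1/λ_1] → M_n(ℝ) be continuous with Ǧ(x,ν)_{jℓ} = 0 whenever ℓ ≤ j. For continuous ζ : ℝ → ℝⁿ, define α : ℝ × [0,1] → ℝⁿ componentwise by α_j(t,x) = ζ_j(t + (1−x)/λ_j) + Σ_{ℓ=j+1}^n ∫_0^{(1−x)/λ_j} Ǧ(x,ν)_{jℓ} ζ_ℓ(t + ν) dν. Then there exists a constant K > 0, depending only on λ_1, …, λ_n and Ǧ, such that for every continuous ζ and every t ∈ ℝ: ∫_0^1 ‖α(t,x)‖² dx ≤ K ∫_t^{t + 1/λ_1} ‖ζ(s)‖² ds. -/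

import Mathlib

open Matrix Set

/-!
At a fixed time, `α(t, ·)` depends only on the window `f = ζ(t + ·)` of the trace on `[0, T]`, where
`T = 1/λ_1` is the longest travel time, so the claim is the boundedness of a linear operator from
`L²(0, T)` to `L²(0, 1)`. Its diagonal part `f_j((1 - x)/λ_j)` is a linear change of variables with
Jacobian `λ_j`. Its integral part is of Hilbert–Schmidt type: by Cauchy–Schwarz in `ν` and in the
index `ℓ`, its square at `x` is at most `∑_ℓ ∫₀ᵀ Ǧ(x, ν)_{jℓ}² dν` times `‖f‖²`, and Fubini makes
this integrable in `x`. Hence `K = 2 (∑_j λ_j + ‖Ǧ‖²)`, with the `L²` norm of `Ǧ`, is admissible.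
-/

open MeasureTheory

section SquareIntegrable

variable {α β : Type*} [MeasurableSpace α] [MeasurableSpace β] {μ : Measure α} {ν : Measure β}

lemma sq_integral_mul_le {f g : α → ℝ} (hf : MemLp f 2 μ) (hg : MemLp g 2 μ) :
    (∫ a, f a * g a ∂μ) ^ 2 ≤ (∫ a, f a ^ 2 ∂μ) * ∫ a, g a ^ 2 ∂μ := by
  have inner_toLp {u v : α → ℝ} (hu : MemLp u 2 μ) (hv : MemLp v 2 μ) :
      inner ℝ (hu.toLp u) (hv.toLp v) = ∫ a, u a * v a ∂μ := by
    rw [L2.inner_def]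
    refine integral_congr_ae ?_
    filter_upwards [hu.coeFn_toLp, hv.coeFn_toLp] with a hua hva
    simp only [hua, hva, RCLike.inner_apply, conj_trivial, mul_comm]
  simpa only [inner_toLp, ← sq] using real_inner_mul_inner_self_le (hf.toLp f) (hg.toLp g)

lemma sq_setIntegral_mul_le {s t : Set α} (hst : s ⊆ t) {f g : α → ℝ}
    (hf : MemLp f 2 (μ.restrict t)) (hg : MemLp g 2 (μ.restrict t)) :
    (∫ a in s, f a * g a ∂μ) ^ 2 ≤ (∫ a in t, f a ^ 2 ∂μ) * ∫ a in t, g a ^ 2 ∂μ := by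
  have hμ : μ.restrict s ≤ μ.restrict t := Measure.restrict_mono_set μ hst
  have mono {u : α → ℝ} (hu : MemLp u 2 (μ.restrict t)) :
      ∫ a in s, u a ^ 2 ∂μ ≤ ∫ a in t, u a ^ 2 ∂μ :=
    integral_mono_measure hμ (ae_of_all _ fun a => sq_nonneg (u a)) hu.integrable_sq
  calc (∫ a in s, f a * g a ∂μ) ^ 2
      ≤ (∫ a in s, f a ^ 2 ∂μ) * ∫ a in s, g a ^ 2 ∂μ :=
        sq_integral_mul_le (hf.mono_measure hμ) (hg.mono_measure hμ)
    _ ≤ (∫ a in t, f a ^ 2 ∂μ) * ∫ a in t, g a ^ 2 ∂μ :=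
        mul_le_mul (mono hf) (mono hg) (integral_nonneg fun a => sq_nonneg (g a))
          (integral_nonneg fun a => sq_nonneg (f a))

lemma ae_memLp_two_prodMk_left [SFinite μ] [SFinite ν] {E : Type*} [NormedAddCommGroup E]
    {f : α × β → E} (hf : MemLp f 2 (μ.prod ν)) : ∀ᵐ a ∂μ, MemLp (fun b => f (a, b)) 2 ν := by
  filter_upwards [hf.aestronglyMeasurable.prodMk_left, hf.norm.integrable_sq.prod_right_ae]
    with a hmeas hint
  exact (memLp_two_iff_integrable_sq_norm hmeas).2 hint

end SquareIntegrable

section Continuous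

lemma memLp_restrict_of_continuousOn {X E : Type*} [TopologicalSpace X]
    [TopologicalSpace.PseudoMetrizableSpace X] [MeasurableSpace X] [OpensMeasurableSpace X]
    [NormedAddCommGroup E] {μ : Measure X} [IsFiniteMeasureOnCompacts μ] {f : X → E} {s : Set X}
    {p : ENNReal} (hf : ContinuousOn f s) (hs : IsCompact s) (hsm : MeasurableSet s) :
    MemLp f p (μ.restrict s) := by
  obtain ⟨C, hC⟩ := hs.exists_bound_of_continuousOn hf
  have : IsFiniteMeasure (μ.restrict s) := isFiniteMeasure_restrict.2 hs.measure_ne_top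
  exact MemLp.of_bound (hf.aestronglyMeasurable_of_isCompact hs hsm) C
    (ae_restrict_of_forall_mem hsm hC)

lemma memLp_restrict_Ioc_of_continuous {E : Type*} [NormedAddCommGroup E] {f : ℝ → E}
    (hf : Continuous f) (a b : ℝ) {p : ENNReal} : MemLp f p (volume.restrict (Ioc a b)) :=
  (memLp_restrict_of_continuousOn hf.continuousOn isCompact_Icc measurableSet_Icc).mono_measure
    (Measure.restrict_mono_set _ Ioc_subset_Icc_self)

lemma memLp_entry_of_continuousOn {m n : Type*} {G : ℝ → ℝ → Matrix m n ℝ} {a b c d : ℝ}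
    {p : ENNReal}
    (hG : ContinuousOn (fun q : ℝ × ℝ => G q.1 q.2) (Icc a b ×ˢ Icc c d)) (j : m) (ℓ : n) :
    MemLp (fun q : ℝ × ℝ => G q.1 q.2 j ℓ) p (volume.restrict (Ioc a b ×ˢ Ioc c d)) :=
  (memLp_restrict_of_continuousOn ((continuous_apply_apply j ℓ).comp_continuousOn hG)
    (isCompact_Icc.prod isCompact_Icc) (measurableSet_Icc.prod measurableSet_Icc)).mono_measure
      (Measure.restrict_mono_set _ (prod_mono Ioc_subset_Icc_self Ioc_subset_Icc_self))

end Continuous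

section Transport

variable {c T : ℝ}

lemma integrableOn_comp_one_sub_div {E : Type*} [NormedAddCommGroup E] {g : ℝ → E} (hc : 0 < c)
    (hcT : 1 / c ≤ T) (hg : IntegrableOn g (Ioc 0 T)) :
    IntegrableOn (fun x => g ((1 - x) / c)) (Ioc 0 1) := by
  have hg' : IntervalIntegrable g volume 0 (1 / c) :=
    (intervalIntegrable_iff_integrableOn_Ioc_of_le (by positivity)).2
      (hg.mono_set (Ioc_subset_Ioc_right hcT))
  have hcomp : IntervalIntegrable (fun x => g ((1 - x) / c)) volume 1 0 := by
    simpa [hc.ne', div_eq_inv_mul] using (hg'.comp_mul_left (c := c⁻¹)).comp_sub_left 1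
  exact (intervalIntegrable_iff_integrableOn_Ioc_of_le zero_le_one).1 hcomp.symm

lemma setIntegral_comp_one_sub_div_le {g : ℝ → ℝ} (hc : 0 < c) (hcT : 1 / c ≤ T)
    (hg0 : 0 ≤ g) (hg : IntegrableOn g (Ioc 0 T)) :
    ∫ x in Ioc 0 1, g ((1 - x) / c) ≤ c * ∫ s in Ioc 0 T, g s := by
  calc ∫ x in Ioc 0 1, g ((1 - x) / c) = c * ∫ s in Ioc 0 (1 / c), g s := by
        rw [← intervalIntegral.integral_of_le zero_le_one,
          ← intervalIntegral.integral_of_le (by positivity)]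
        simp only [sub_div, intervalIntegral.integral_comp_sub_div g hc.ne', sub_self, zero_div,
          sub_zero, smul_eq_mul]
    _ ≤ c * ∫ s in Ioc 0 T, g s := by
        refine mul_le_mul_of_nonneg_left ?_ hc.le
        exact setIntegral_mono_set hg (ae_of_all _ hg0) (Ioc_subset_Ioc_right hcT).eventuallyLE

end Transport

/-- The spatial profile `α(t, ·)` of the rightward-traveling target state, in terms of the window
`f = ζ(t + ·)` of its right boundary trace. The kernel is not required to be triangular, so the sum
runs over all `ℓ`. -/
noncomputable def rightwardState {ι : Type*} [Fintype ι] (lam : ι → ℝ)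
    (G : ℝ → ℝ → Matrix ι ι ℝ) (f : ℝ → ι → ℝ) (x : ℝ) (j : ι) : ℝ :=
  f ((1 - x) / lam j) j + ∑ ℓ, ∫ ν in (0 : ℝ)..((1 - x) / lam j), G x ν j ℓ * f ν ℓ

section RightwardState

variable {ι : Type*} [Fintype ι] {lam : ι → ℝ} {G : ℝ → ℝ → Matrix ι ι ℝ} {f : ℝ → ι → ℝ} {T : ℝ}

lemma rightwardState_of_strictUpperTriangular [LinearOrder ι]
    (hG : ∀ x ν : ℝ, ∀ j ℓ : ι, ℓ ≤ j → G x ν j ℓ = 0) (x : ℝ) (j : ι) :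
    rightwardState lam G f x j = f ((1 - x) / lam j) j
      + ∑ ℓ ∈ Finset.univ.filter (fun ℓ => j < ℓ),
          ∫ ν in (0 : ℝ)..((1 - x) / lam j), G x ν j ℓ * f ν ℓ := by
  rw [rightwardState, Finset.sum_filter_of_ne]
  intro ℓ _ hne
  by_contra! hle
  exact hne (by simp only [hG x _ j ℓ hle, zero_mul, intervalIntegral.integral_zero])

lemma sq_rightwardState_le {x : ℝ} {j : ι} (hx : (1 - x) / lam j ∈ Icc 0 T)
    (hG : ∀ ℓ, MemLp (fun ν => G x ν j ℓ) 2 (volume.restrict (Ioc 0 T)))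
    (hf : ∀ k, MemLp (fun ν => f ν k) 2 (volume.restrict (Ioc 0 T))) :
    rightwardState lam G f x j ^ 2 ≤ 2 * (f ((1 - x) / lam j) j ^ 2
      + (∑ ℓ, ∫ ν in Ioc 0 T, G x ν j ℓ ^ 2) * ∑ k, ∫ ν in Ioc 0 T, f ν k ^ 2) := by
  have volterra_le : (∑ ℓ, ∫ ν in (0 : ℝ)..((1 - x) / lam j), G x ν j ℓ * f ν ℓ) ^ 2
      ≤ (∑ ℓ, ∫ ν in Ioc 0 T, G x ν j ℓ ^ 2) * ∑ k, ∫ ν in Ioc 0 T, f ν k ^ 2 := by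
    refine Finset.sum_sq_le_sum_mul_sum_of_sq_le_mul _
      (fun ℓ _ => integral_nonneg fun ν => sq_nonneg _)
      (fun ℓ _ => integral_nonneg fun ν => sq_nonneg _) fun ℓ _ => ?_
    rw [intervalIntegral.integral_of_le hx.1]
    exact sq_setIntegral_mul_le (Ioc_subset_Ioc_right hx.2) (hG ℓ) (hf ℓ)
  exact add_sq_le.trans (by gcongr)

lemma ae_sq_rightwardState_le (hpos : ∀ j, 0 < lam j) (hT : ∀ j, 1 / lam j ≤ T)
    (hG : ∀ j ℓ, MemLp (fun q : ℝ × ℝ => G q.1 q.2 j ℓ) 2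
      ((volume.restrict (Ioc 0 1)).prod (volume.restrict (Ioc 0 T))))
    (hf : ∀ k, MemLp (fun ν => f ν k) 2 (volume.restrict (Ioc 0 T))) :
    ∀ᵐ x ∂volume.restrict (Ioc 0 1), ∀ j,
      rightwardState lam G f x j ^ 2 ≤ 2 * (f ((1 - x) / lam j) j ^ 2
        + (∑ ℓ, ∫ ν in Ioc 0 T, G x ν j ℓ ^ 2) * ∑ k, ∫ ν in Ioc 0 T, f ν k ^ 2) := by
  have hsec : ∀ᵐ x ∂volume.restrict (Ioc (0 : ℝ) 1), ∀ j ℓ,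
      MemLp (fun ν => G x ν j ℓ) 2 (volume.restrict (Ioc 0 T)) :=
    ae_all_iff.2 fun j => ae_all_iff.2 fun ℓ => ae_memLp_two_prodMk_left (hG j ℓ)
  filter_upwards [hsec, ae_restrict_mem measurableSet_Ioc] with x hGx hx j
  refine sq_rightwardState_le ⟨?_, le_trans ?_ (hT j)⟩ (hGx j) hf
  · exact div_nonneg (sub_nonneg.2 hx.2) (hpos j).le
  · exact div_le_div_of_nonneg_right (sub_le_self 1 hx.1.le) (hpos j).le

lemma setIntegral_sq_comp_one_sub_div_le {c : ℝ} {j : ι} (hc : 0 < c) (hcT : 1 / c ≤ T)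
    (hf : ∀ k, MemLp (fun ν => f ν k) 2 (volume.restrict (Ioc 0 T))) :
    ∫ x in Ioc 0 1, f ((1 - x) / c) j ^ 2 ≤ c * ∑ k, ∫ ν in Ioc 0 T, f ν k ^ 2 := by
  calc ∫ x in Ioc 0 1, f ((1 - x) / c) j ^ 2 ≤ c * ∫ ν in Ioc 0 T, f ν j ^ 2 :=
        setIntegral_comp_one_sub_div_le hc hcT (fun s => sq_nonneg (f s j)) (hf j).integrable_sq
    _ ≤ c * ∑ k, ∫ ν in Ioc 0 T, f ν k ^ 2 := by
        refine mul_le_mul_of_nonneg_left ?_ hc.le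
        exact Finset.single_le_sum (f := fun k => ∫ ν in Ioc 0 T, f ν k ^ 2)
          (fun k _ => integral_nonneg fun ν => sq_nonneg (f ν k)) (Finset.mem_univ j)

lemma setIntegral_sum_sq_rightwardState_le (hpos : ∀ j, 0 < lam j) (hT : ∀ j, 1 / lam j ≤ T)
    (hG : ∀ j ℓ, MemLp (fun q : ℝ × ℝ => G q.1 q.2 j ℓ) 2
      ((volume.restrict (Ioc 0 1)).prod (volume.restrict (Ioc 0 T))))
    (hf : ∀ k, MemLp (fun ν => f ν k) 2 (volume.restrict (Ioc 0 T))) :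
    ∫ x in Ioc 0 1, ∑ j, rightwardState lam G f x j ^ 2
      ≤ 2 * (∑ j, (lam j + ∫ x in Ioc 0 1, ∑ ℓ, ∫ ν in Ioc 0 T, G x ν j ℓ ^ 2))
        * ∑ k, ∫ ν in Ioc 0 T, f ν k ^ 2 := by
  set E := ∑ k, ∫ ν in Ioc 0 T, f ν k ^ 2
  let rowSq (j : ι) (x : ℝ) : ℝ := ∑ ℓ, ∫ ν in Ioc 0 T, G x ν j ℓ ^ 2
  have transport_int (j : ι) : IntegrableOn (fun x => f ((1 - x) / lam j) j ^ 2) (Ioc 0 1) :=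
    integrableOn_comp_one_sub_div (hpos j) (hT j) (hf j).integrable_sq
  have row_int (j : ι) : IntegrableOn (fun x => rowSq j x * E) (Ioc 0 1) :=
    (integrable_finsetSum _ fun ℓ _ => (hG j ℓ).integrable_sq.integral_prod_left).mul_const E
  have bound_int (j : ι) :
      IntegrableOn (fun x => 2 * (f ((1 - x) / lam j) j ^ 2 + rowSq j x * E)) (Ioc 0 1) :=
    ((transport_int j).add (row_int j)).const_mul 2
  calc ∫ x in Ioc 0 1, ∑ j, rightwardState lam G f x j ^ 2
      ≤ ∫ x in Ioc 0 1, ∑ j, 2 * (f ((1 - x) / lam j) j ^ 2 + rowSq j x * E) := by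
        -- This form of monotonicity asks for integrability of the dominating function only.
        refine integral_mono_of_nonneg
          (ae_of_all _ fun x => Finset.sum_nonneg fun j _ => sq_nonneg _)
          (integrable_finsetSum _ fun j _ => bound_int j) ?_
        filter_upwards [ae_sq_rightwardState_le hpos hT hG hf] with x hx
        exact Finset.sum_le_sum fun j _ => hx j
    _ = ∑ j, 2 * ((∫ x in Ioc 0 1, f ((1 - x) / lam j) j ^ 2)
          + (∫ x in Ioc 0 1, rowSq j x) * E) := by
        rw [integral_finsetSum _ fun j _ => bound_int j]
        refine Finset.sum_congr rfl fun j _ => ?_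
        rw [integral_const_mul, integral_add (transport_int j) (row_int j), integral_mul_const]
    _ ≤ ∑ j, 2 * (lam j * E + (∫ x in Ioc 0 1, rowSq j x) * E) := by
        gcongr with j
        exact setIntegral_sq_comp_one_sub_div_le (hpos j) (hT j) hf
    _ = 2 * (∑ j, (lam j + ∫ x in Ioc 0 1, rowSq j x)) * E := by
        simp only [← add_mul, ← Finset.mul_sum, ← Finset.sum_mul, mul_assoc]

lemma integral_sum_sq_translate (t : ℝ) {ζ : ℝ → ι → ℝ} (hT : 0 ≤ T)
    (hζ : ∀ k, MemLp (fun ν => ζ (t + ν) k) 2 (volume.restrict (Ioc 0 T))) :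
    ∫ s in t..(t + T), ∑ k, ζ s k ^ 2 = ∑ k, ∫ ν in Ioc 0 T, ζ (t + ν) k ^ 2 := by
  rw [← integral_finsetSum _ fun k _ => (hζ k).integrable_sq,
    ← intervalIntegral.integral_of_le hT,
    intervalIntegral.integral_comp_add_left (fun s => ∑ k, ζ s k ^ 2), add_zero]

end RightwardState

theorem stmt8_general {ι : Type*} [Fintype ι] {lam : ι → ℝ} {G : ℝ → ℝ → Matrix ι ι ℝ} {T : ℝ}
    (hpos : ∀ j, 0 < lam j) (hT : ∀ j, 1 / lam j ≤ T)
    (hG : ∀ j ℓ, MemLp (fun q : ℝ × ℝ => G q.1 q.2 j ℓ) 2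
      (volume.restrict (Ioc 0 1 ×ˢ Ioc 0 T))) :
    ∃ K : ℝ, 0 < K ∧ ∀ (ζ : ℝ → ι → ℝ) (t : ℝ),
      (∀ k, MemLp (fun ν => ζ (t + ν) k) 2 (volume.restrict (Ioc 0 T))) →
        ∫ x in (0 : ℝ)..1, ∑ j, rightwardState lam G (fun ν => ζ (t + ν)) x j ^ 2
          ≤ K * ∫ s in t..(t + T), ∑ k, ζ s k ^ 2 := by
  simp only [Measure.volume_eq_prod, ← Measure.prod_restrict] at hG
  cases isEmpty_or_nonempty ι with
  | inl _ => exact ⟨1, one_pos, fun ζ t _ => by simp⟩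
  | inr hι =>
    have hT0 : 0 ≤ T := (one_div_pos.2 (hpos hι.some)).le.trans (hT _)
    have hK : 0 < 2 * ∑ j, (lam j + ∫ x in Ioc 0 1, ∑ ℓ, ∫ ν in Ioc 0 T, G x ν j ℓ ^ 2) :=
      mul_pos two_pos <| Finset.sum_pos (fun j _ => add_pos_of_pos_of_nonneg (hpos j) <|
        integral_nonneg fun x => Finset.sum_nonneg fun ℓ _ => integral_nonneg fun ν =>
          sq_nonneg (G x ν j ℓ)) Finset.univ_nonempty
    refine ⟨_, hK, fun ζ t hζ => ?_⟩
    rw [intervalIntegral.integral_of_le zero_le_one, integral_sum_sq_translate t hT0 hζ]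
    exact setIntegral_sum_sq_rightwardState_le hpos hT hG hζ

/-- the `L²` bound on the rightward-traveling target state `α`
established in the proof of Property 2 of the paper: for the closed
characteristic representation of `α` in terms of its right boundary trace
`ζ = α(·,1)`, the spatial `L²`-norm of `α(t,·)` is bounded by the `L²`-norm of
`ζ` over `[t, t + 1/λ_1]`, with a constant independent of `ζ` and `t`. -/
theorem stmt8 (n : ℕ) (hn : 1 ≤ n) (lam : Fin n → ℝ)
    (hpos : ∀ j, 0 < lam j) (hmono : StrictMono lam)
    (Gc : ℝ → ℝ → Matrix (Fin n) (Fin n) ℝ)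
    (hGcCont : ContinuousOn (fun q : ℝ × ℝ => Gc q.1 q.2)
      (Icc (0:ℝ) 1 ×ˢ Icc (0:ℝ) (1 / lam ⟨0, hn⟩)))
    (hGcTri : ∀ x ν : ℝ, ∀ j ℓ : Fin n, ℓ ≤ j → Gc x ν j ℓ = 0) :
    ∃ K : ℝ, 0 < K ∧
      ∀ ζ : ℝ → Fin n → ℝ, Continuous ζ →
        ∀ α : ℝ → ℝ → Fin n → ℝ,
        (∀ (t x : ℝ) (j : Fin n), α t x j =
            ζ (t + (1 - x) / lam j) j
            + ∑ ℓ ∈ Finset.univ.filter (fun ℓ => j < ℓ),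
                ∫ ν in (0:ℝ)..((1 - x) / lam j), Gc x ν j ℓ * ζ (t + ν) ℓ) →
        ∀ t : ℝ,
          (∫ x in (0:ℝ)..1, ∑ j, (α t x j) ^ 2)
            ≤ K * ∫ s in t..(t + 1 / lam ⟨0, hn⟩), ∑ k, (ζ s k) ^ 2 := by
  have hT (j : Fin n) : 1 / lam j ≤ 1 / lam ⟨0, hn⟩ :=
    one_div_le_one_div_of_le (hpos _) (hmono.monotone (Nat.zero_le j.val))
  obtain ⟨K, hK, hbound⟩ := stmt8_general hpos hT (memLp_entry_of_continuousOn hGcCont)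
  refine ⟨K, hK, fun ζ hζ α hα t => ?_⟩
  simpa only [hα, rightwardState_of_strictUpperTriangular hGcTri] using
    hbound ζ t fun k => memLp_restrict_Ioc_of_continuous (by fun_prop) 0 _
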